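/- arXiv:math/0411421 — 4 statements merged into one kernel-verified Lean document; each statement's English description precedes it below -/
import Mathlib

section
/- For j ≥ 0 let a_j denote the j-th derivative of the function λ ↦ √(λ/(2−λ)) (which is C^∞ on the interval (0,2)) evaluated at λ = 1. Then a_0 = 1, and for j ≥ 1 the sequence satisfies the recursion: a_j = (j−1)·a_{j−1} if j is even, and a_j = j·a_{j−1} if j is odd. -/
/-!
The function `f l = √(l / (2 - l))` satisfies `(1 - (l - 1) ^ 2) * f' l = f l` on `(0, 2)`. At the
centre `1` the Leibniz rule keeps only two terms of the derivatives of the left-hand side, so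
differentiating `n + 1` times gives `a (n + 2) = a (n + 1) + (n + 1) * n * a n`. Since `a 1 = a 0`,
the claimed first-order recursion follows by alternating between odd and even indices: each parity
turns the term `a n` into a multiple of `a (n + 1)`.
-/

open scoped Topology

section IteratedDeriv

variable {𝕜 : Type*} [NontriviallyNormedField 𝕜]

lemma iteratedDeriv_fun_sub_pow_self (c : 𝕜) (n k : ℕ) :
    iteratedDeriv n (fun x ↦ (x - c) ^ k) c = if n = k then k.factorial else 0 := by
  rw [congrFun (iteratedDeriv_comp_sub_const n (· ^ k) c) c, sub_self, iteratedDeriv_fun_pow_zero]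

lemma iteratedDeriv_sub_pow_mul_self {c : 𝕜} {n : ℕ} {g : 𝕜 → 𝕜} (hg : ContDiffAt 𝕜 n g c)
    (k : ℕ) :
    iteratedDeriv n (fun x ↦ (x - c) ^ k * g x) c
      = n.descFactorial k * iteratedDeriv (n - k) g c := by
  have hpow : ContDiffAt 𝕜 n (fun x ↦ (x - c) ^ k) c := by fun_prop
  simp only [iteratedDeriv_fun_mul hpow hg, iteratedDeriv_fun_sub_pow_self]
  rw [Finset.sum_eq_single k]
  · rw [if_pos rfl, Nat.descFactorial_eq_factorial_mul_choose]
    push_cast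
    ring
  · intro i _ hik
    simp [hik]
  · intro hk
    simp [Nat.choose_eq_zero_of_lt (by simpa using hk : n < k)]

lemma iteratedDeriv_add_two_of_sub_sq_mul_deriv_eq {α r c : 𝕜} {n : ℕ} {f : 𝕜 → 𝕜}
    (hf : ContDiffAt 𝕜 (n + 2) f c)
    (hode : ∀ᶠ x in 𝓝 c, (α - (x - c) ^ 2) * deriv f x = r * f x) :
    α * iteratedDeriv (n + 2) f c
      = r * iteratedDeriv (n + 1) f c + (n + 1) * n * iteratedDeriv n f c := by
  have hf' : ContDiffAt 𝕜 (n + 1 : ℕ) (deriv f) c := hf.derivWithin (by norm_cast)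
  have hode' : (fun x ↦ α * deriv f x) =ᶠ[𝓝 c] fun x ↦ r * f x + (x - c) ^ 2 * deriv f x := by
    filter_upwards [hode] with x hx
    linear_combination hx
  have hfr : ContDiffAt 𝕜 (n + 1 : ℕ) (fun x ↦ r * f x) c :=
    contDiffAt_const.mul (hf.of_le (by norm_cast; omega))
  calc α * iteratedDeriv (n + 2) f c
      = iteratedDeriv (n + 1) (fun x ↦ α * deriv f x) c := by
        rw [iteratedDeriv_const_mul_field, ← iteratedDeriv_succ']
    _ = iteratedDeriv (n + 1) (fun x ↦ r * f x + (x - c) ^ 2 * deriv f x) c :=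
        hode'.iteratedDeriv_eq _
    _ = r * iteratedDeriv (n + 1) f c
          + (n + 1).descFactorial 2 * iteratedDeriv (n + 1 - 2) (deriv f) c := by
        rw [iteratedDeriv_fun_add hfr (by fun_prop), iteratedDeriv_const_mul_field,
          iteratedDeriv_sub_pow_mul_self hf']
    _ = r * iteratedDeriv (n + 1) f c + (n + 1) * n * iteratedDeriv n f c := by
        cases n with
        | zero => simp
        | succ m =>
          rw [show m + 1 + 1 - 2 = m by omega, ← iteratedDeriv_succ']
          simp only [Nat.descFactorial_succ, Nat.descFactorial_zero]
          push_cast [Nat.add_sub_cancel]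
          ring

end IteratedDeriv

section SqrtDivSub

variable {b x : ℝ}

lemma contDiffAt_sqrt_div_sub {n : WithTop ℕ∞} (hx : x ∈ Set.Ioo 0 b) :
    ContDiffAt ℝ n (fun l ↦ √(l / (b - l))) x := by
  have hbx : 0 < b - x := sub_pos.2 hx.2
  exact (contDiffAt_id.div (contDiffAt_const.sub contDiffAt_id) hbx.ne').sqrt
    (div_pos hx.1 hbx).ne'

lemma mul_sub_mul_deriv_sqrt_div_sub (hx : x ∈ Set.Ioo 0 b) :
    x * (b - x) * deriv (fun l ↦ √(l / (b - l))) x = b / 2 * √(x / (b - x)) := by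
  have hbx : 0 < b - x := sub_pos.2 hx.2
  have hpos : 0 < x / (b - x) := div_pos hx.1 hbx
  have hquot : HasDerivAt (fun l ↦ l / (b - l)) (b / (b - x) ^ 2) x :=
    ((hasDerivAt_id x).div ((hasDerivAt_id x).const_sub b) hbx.ne').congr_deriv
      (by simp only [id]; ring)
  rw [(hquot.sqrt hpos.ne').deriv]
  have hsq : √(x / (b - x)) ^ 2 * (b - x) = x := by
    rw [Real.sq_sqrt hpos.le, div_mul_cancel₀ _ hbx.ne']
  have hsqrt : √(x / (b - x)) ≠ 0 := (Real.sqrt_pos.2 hpos).ne'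
  generalize √(x / (b - x)) = s at *
  field_simp
  linear_combination -b * hsq

lemma sq_mul_iteratedDeriv_add_two_sqrt_div_sub (hb : 0 < b) (n : ℕ) :
    (b / 2) ^ 2 * iteratedDeriv (n + 2) (fun l ↦ √(l / (b - l))) (b / 2)
      = b / 2 * iteratedDeriv (n + 1) (fun l ↦ √(l / (b - l))) (b / 2)
        + (n + 1) * n * iteratedDeriv n (fun l ↦ √(l / (b - l))) (b / 2) := by
  have hmid : b / 2 ∈ Set.Ioo 0 b := ⟨half_pos hb, half_lt_self hb⟩
  refine iteratedDeriv_add_two_of_sub_sq_mul_deriv_eq (contDiffAt_sqrt_div_sub hmid) ?_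
  filter_upwards [isOpen_Ioo.mem_nhds hmid] with x hx
  rw [← mul_sub_mul_deriv_sqrt_div_sub hx]
  ring

end SqrtDivSub

lemma eq_two_mul_add_one_mul_of_recurrence {R : Type*} [CommSemiring R] {a : ℕ → R} (h₁ : a 1 = a 0)
    (hrec : ∀ n : ℕ, a (n + 2) = a (n + 1) + (n + 1) * n * a n) (m : ℕ) :
    a (2 * m + 1) = (2 * m + 1) * a (2 * m) ∧
      a (2 * m + 2) = (2 * m + 1) * a (2 * m + 1) := by
  have even_step (k : ℕ) (hodd : a (2 * k + 1) = (2 * k + 1) * a (2 * k)) :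
      a (2 * k + 2) = (2 * k + 1) * a (2 * k + 1) := by
    calc a (2 * k + 2) = a (2 * k + 1) + 2 * k * ((2 * k + 1) * a (2 * k)) := by
          rw [hrec]; push_cast; ring
      _ = (2 * k + 1) * a (2 * k + 1) := by rw [← hodd]; ring
  have odd_step (k : ℕ) : a (2 * k + 1) = (2 * k + 1) * a (2 * k) := by
    induction k with
    | zero => simp [h₁]
    | succ k ih =>
      calc a (2 * k + 3) = a (2 * k + 2) + (2 * k + 2) * ((2 * k + 1) * a (2 * k + 1)) := by
            rw [hrec (2 * k + 1)]; push_cast; ring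
        _ = (2 * (k + 1 : ℕ) + 1) * a (2 * k + 2) := by
            rw [← even_step k ih]; push_cast; ring
  exact ⟨odd_step m, even_step m (odd_step m)⟩

/-- Lemma 1: recursion for the derivatives a_j of λ ↦ √(λ/(2-λ)) at λ = 1. -/
theorem stmt_2 (a : ℕ → ℝ)
    (ha : ∀ j, a j = iteratedDeriv j (fun l : ℝ => Real.sqrt (l / (2 - l))) 1) :
    a 0 = 1 ∧ ∀ j, 1 ≤ j →
      (Even j → a j = ((j : ℝ) - 1) * a (j - 1)) ∧
      (Odd j → a j = (j : ℝ) * a (j - 1)) := by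
  have h₀ : a 0 = 1 := by norm_num [ha]
  have h₁ : a 1 = a 0 := by
    simpa [ha, show (2 : ℝ) - 1 = 1 by norm_num] using
      mul_sub_mul_deriv_sqrt_div_sub (b := 2) (x := 1) (by norm_num)
  have hrec (n : ℕ) : a (n + 2) = a (n + 1) + (n + 1) * n * a n := by
    simpa [ha] using sq_mul_iteratedDeriv_add_two_sqrt_div_sub two_pos n
  refine ⟨h₀, fun j hj ↦ ⟨?_, ?_⟩⟩
  · intro heven
    obtain ⟨m, rfl⟩ : ∃ m, j = 2 * m + 2 := ⟨j / 2 - 1, by grind⟩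
    rw [show 2 * m + 2 - 1 = 2 * m + 1 by omega, (eq_two_mul_add_one_mul_of_recurrence h₁ hrec m).2]
    push_cast
    ring
  · rintro ⟨m, rfl⟩
    exact_mod_cast (eq_two_mul_add_one_mul_of_recurrence h₁ hrec m).1
end

section
/- Let g : ℝ → ℝ be infinitely differentiable (C^∞) and let h(λ) = 2λ − λ². Then for every integer j ≥ 0: the (2j+1)-st derivative of the composite λ ↦ g(h(λ)) at λ = 1 equals 0, and the (2j)-th derivative of λ ↦ g(h(λ)) at λ = 1 equals (−1)^j · (2j)!/j! · g^{(j)}(1), where g^{(j)} denotes the j-th derivative of g. -/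
/-! Completing the square, `2 * l - l ^ 2 = -(l - 1) ^ 2 + 1`, so the composite is symmetric about
`1` and its odd derivatives there vanish. For the even ones put `q x = a * (x - x₀) ^ 2 + c`. The
chain rule gives `(g ∘ q)' x = (2 * a * (x - x₀)) • g' (q x)`, and by Leibniz' rule at `x₀` only the
term in which the linear factor is differentiated once survives:
`(g ∘ q)⁽ⁿ⁺²⁾ x₀ = (2 * a * (n + 1)) • (g' ∘ q)⁽ⁿ⁾ x₀`.
Iterating yields the coefficient `(2 * a) ^ j * (2 * j - 1)‼`; in Faà di Bruno's formula this is
`(q'' x₀) ^ j` times the number of partitions of `2 * j` points into pairs. -/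

open scoped Nat Topology

section

variable {𝕜 F : Type*} [NontriviallyNormedField 𝕜] [NormedAddCommGroup F] [NormedSpace 𝕜 F]

lemma iteratedDeriv_eq_zero_of_odd_of_reflection_invariant [NeZero (2 : 𝕜)] {f : 𝕜 → F} {x₀ : 𝕜}
    {n : ℕ} (hn : Odd n) (hf : ∀ x, f (2 * x₀ - x) = f x) : iteratedDeriv n f x₀ = 0 := by
  have hneg : iteratedDeriv n f x₀ = -iteratedDeriv n f x₀ := by
    have h := congrFun (iteratedDeriv_comp_const_sub n f (2 * x₀)) x₀
    rwa [funext hf, hn.neg_one_pow, neg_one_smul, show 2 * x₀ - x₀ = x₀ by ring] at h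
  have htwo : (2 : 𝕜) • iteratedDeriv n f x₀ = 0 := by
    rwa [two_smul, ← eq_neg_iff_add_eq_zero]
  exact (smul_eq_zero_iff_right two_ne_zero).mp htwo

lemma iteratedDeriv_sub_const_self (n : ℕ) (x₀ : 𝕜) :
    iteratedDeriv n (fun x ↦ x - x₀) x₀ = if n = 1 then 1 else 0 := by
  simp only [iteratedDeriv_comp_sub_const n (fun x ↦ x), sub_self, iteratedDeriv_fun_id_zero]

lemma iteratedDeriv_succ_sub_smul_self {f : 𝕜 → F} {x₀ : 𝕜} {n : ℕ}
    (hf : ContDiffAt 𝕜 (n + 1 : ℕ) f x₀) :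
    iteratedDeriv (n + 1) (fun x ↦ (x - x₀) • f x) x₀ = (n + 1 : 𝕜) • iteratedDeriv n f x₀ := by
  have hsub : ContDiffAt 𝕜 (n + 1 : ℕ) (fun x ↦ x - x₀) x₀ := by fun_prop
  have leibniz := iteratedDerivWithin_smul (Set.mem_univ x₀) uniqueDiffOn_univ
    hsub.contDiffWithinAt hf.contDiffWithinAt
  simp only [iteratedDerivWithin_univ, iteratedDeriv_sub_const_self] at leibniz
  refine leibniz.trans ?_
  rw [Finset.sum_eq_single_of_mem 1 (by simp) fun i _ hi ↦ by simp [hi]]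
  simp [← Nat.cast_smul_eq_nsmul 𝕜]

lemma deriv_comp_quadratic {g : 𝕜 → F} {a c x₀ x : 𝕜}
    (hg : DifferentiableAt 𝕜 g (a * (x - x₀) ^ 2 + c)) :
    deriv (fun y ↦ g (a * (y - x₀) ^ 2 + c)) x =
      (2 * a) • (x - x₀) • deriv g (a * (x - x₀) ^ 2 + c) := by
  have hq : HasDerivAt (fun y ↦ a * (y - x₀) ^ 2 + c) (2 * a * (x - x₀)) x := by
    convert! ((((hasDerivAt_id x).sub_const x₀).pow 2).const_mul a).add_const c using 1
    simp only [Nat.cast_ofNat, id_eq, Nat.add_one_sub_one, pow_one, mul_one]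
    ring
  rw [smul_smul]
  exact (hg.hasDerivAt.scomp x hq).deriv

lemma iteratedDeriv_add_two_comp_quadratic {g : 𝕜 → F} {c : 𝕜} {n : ℕ}
    (hg : ContDiffAt 𝕜 (n + 2 : ℕ) g c) (a x₀ : 𝕜) :
    iteratedDeriv (n + 2) (fun x ↦ g (a * (x - x₀) ^ 2 + c)) x₀ =
      (2 * a * (n + 1)) • iteratedDeriv n (fun x ↦ deriv g (a * (x - x₀) ^ 2 + c)) x₀ := by
  have hq₀ : a * (x₀ - x₀) ^ 2 + c = c := by simp
  have hq : ContDiffAt 𝕜 (n + 1 : ℕ) (fun x ↦ a * (x - x₀) ^ 2 + c) x₀ := by fun_prop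
  have hderiv : deriv (fun x ↦ g (a * (x - x₀) ^ 2 + c)) =ᶠ[𝓝 x₀]
      fun x ↦ (2 * a) • (x - x₀) • deriv g (a * (x - x₀) ^ 2 + c) := by
    have hev : ∀ᶠ y in 𝓝 (a * (x₀ - x₀) ^ 2 + c), ContDiffAt 𝕜 (n + 2 : ℕ) g y := by
      rw [hq₀]
      exact hg.eventually (by simp [-Nat.cast_add])
    filter_upwards [hq.continuousAt.eventually hev] with x hx
    exact deriv_comp_quadratic (hx.differentiableAt (by simp))
  have hg' : ContDiffAt 𝕜 (n + 1 : ℕ) (deriv g) c := hg.derivWithin (by norm_cast)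
  have hcomp : ContDiffAt 𝕜 (n + 1 : ℕ) (fun x ↦ deriv g (a * (x - x₀) ^ 2 + c)) x₀ :=
    ContDiffAt.comp (g := deriv g) x₀ (by rwa [hq₀]) hq
  rw [iteratedDeriv_succ', hderiv.iteratedDeriv_eq, iteratedDeriv_fun_const_smul_field,
    iteratedDeriv_succ_sub_smul_self hcomp, smul_smul]

-- At `j = 0` truncated subtraction gives `(2 * j - 1)‼ = 0‼ = 1`.
lemma iteratedDeriv_two_mul_comp_quadratic {g : 𝕜 → F} {c : 𝕜} {j : ℕ}
    (hg : ContDiffAt 𝕜 (2 * j : ℕ) g c) (a x₀ : 𝕜) :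
    iteratedDeriv (2 * j) (fun x ↦ g (a * (x - x₀) ^ 2 + c)) x₀ =
      ((2 * a) ^ j * ((2 * j - 1)‼ : 𝕜)) • iteratedDeriv j g c := by
  induction j generalizing g with
  | zero => simp
  | succ j ih =>
    have hg' : ContDiffAt 𝕜 (2 * j : ℕ) (deriv g) c := hg.derivWithin (by norm_cast; lia)
    have hfac : (2 * (j + 1) - 1)‼ = (2 * j + 1) * (2 * j - 1)‼ := Nat.doubleFactorial_add_one _
    rw [mul_add_one, iteratedDeriv_add_two_comp_quadratic (n := 2 * j) hg, ih hg', smul_smul,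
      iteratedDeriv_succ', ← mul_add_one, hfac]
    congr 1
    push_cast
    ring

end

lemma factorial_two_mul_eq_doubleFactorial (j : ℕ) : (2 * j)! = 2 ^ j * (2 * j - 1)‼ * j ! := by
  cases j with
  | zero => rfl
  | succ j =>
    have h := Nat.factorial_eq_mul_doubleFactorial (2 * j + 1)
    rw [show 2 * j + 1 + 1 = 2 * (j + 1) by ring, Nat.doubleFactorial_two_mul] at h
    rw [h, show 2 * (j + 1) - 1 = 2 * j + 1 by lia]
    ring

theorem stmt_4_general {𝕜 F : Type*} [NontriviallyNormedField 𝕜] [CharZero 𝕜]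
    [NormedAddCommGroup F] [NormedSpace 𝕜 F] (g : 𝕜 → F) (j : ℕ)
    (hg : ContDiffAt 𝕜 (2 * j + 1 : ℕ) g 1) :
    iteratedDeriv (2 * j + 1) (fun l : 𝕜 ↦ g (2 * l - l ^ 2)) 1 = 0 ∧
    iteratedDeriv (2 * j) (fun l : 𝕜 ↦ g (2 * l - l ^ 2)) 1
      = ((-1) ^ j * (((2 * j).factorial : 𝕜) / (j.factorial : 𝕜))) • iteratedDeriv j g 1 := by
  constructor
  · refine iteratedDeriv_eq_zero_of_odd_of_reflection_invariant
      (odd_two_mul_add_one j) fun l ↦ ?_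
    congr 1
    ring
  · have hsq : (fun l : 𝕜 ↦ g (2 * l - l ^ 2)) = fun l ↦ g (-1 * (l - 1) ^ 2 + 1) := by
      ext l
      congr 1
      ring
    have hj : (j ! : 𝕜) ≠ 0 := mod_cast j.factorial_ne_zero
    have hg' : ContDiffAt 𝕜 (2 * j : ℕ) g 1 := hg.of_le (mod_cast (2 * j).le_succ)
    rw [hsq, iteratedDeriv_two_mul_comp_quadratic hg', factorial_two_mul_eq_doubleFactorial]
    congr 1
    push_cast
    rw [mul_div_cancel_right₀ _ hj, mul_comm 2, mul_pow, mul_assoc]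

/-- Faà di Bruno computation for h(λ) = 2λ - λ² at λ = 1: odd derivatives of
g ∘ h vanish and even derivatives are (-1)^j (2j)!/j! g^{(j)}(1). -/
theorem stmt_4 (g : ℝ → ℝ) (hg : ContDiff ℝ (⊤ : ℕ∞) g) (j : ℕ) :
    iteratedDeriv (2 * j + 1) (fun l : ℝ => g (2 * l - l ^ 2)) 1 = 0 ∧
    iteratedDeriv (2 * j) (fun l : ℝ => g (2 * l - l ^ 2)) 1
      = (-1) ^ j * (((2 * j).factorial : ℝ) / (j.factorial : ℝ)) *
          iteratedDeriv j g 1 :=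
  stmt_4_general g j (contDiff_infty.mp hg (2 * j + 1)).contDiffAt
end

section
/- Let g : ℝ → ℝ be infinitely differentiable (C^∞) and define F(λ) = √(λ/(2−λ)) · g(2λ − λ²) for λ ∈ (0,2). Then for every integer n ≥ 0, the (2n+1)-st derivative of F at λ = 1 equals (2n+1) times the (2n)-th derivative of F at λ = 1. -/
/-!
Near `1` we have `√(x / (2 - x)) = x / √(x * (2 - x))`, so the function in question is `x • G x`
with `G` invariant under the reflection `x ↦ 2 - x`. The odd derivatives of `G` vanish at the fixed
point `1`, so the Leibniz rule leaves `G⁽²ⁿ⁾(1)` in order `2n` and `(2n + 1) • G⁽²ⁿ⁾(1)` in order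
`2n + 1`.
-/

open scoped Topology

section IteratedDeriv

variable {𝕜 E : Type*} [NontriviallyNormedField 𝕜] [NormedAddCommGroup E] [NormedSpace 𝕜 E]

theorem iteratedDeriv_succ_id_smul {G : 𝕜 → E} {x : 𝕜} {n : ℕ}
    (hG : ContDiffAt 𝕜 (n + 1 : ℕ) G x) :
    iteratedDeriv (n + 1) (fun y ↦ y • G y) x =
      x • iteratedDeriv (n + 1) G x + (n + 1 : 𝕜) • iteratedDeriv n G x := by
  have leibniz : iteratedDeriv (n + 1) (fun y ↦ y • G y) x = ∑ i ∈ Finset.range (n + 2),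
      (n + 1).choose i • iteratedDeriv i id x • iteratedDeriv (n + 1 - i) G x := by
    simpa only [iteratedDerivWithin_univ] using!
      iteratedDerivWithin_smul (Set.mem_univ x) uniqueDiffOn_univ contDiffWithinAt_id
        hG.contDiffWithinAt
  have higher_terms : ∀ i ∈ Finset.range n, (n + 1).choose (i + 2) • iteratedDeriv (i + 2) id x •
      iteratedDeriv (n + 1 - (i + 2)) G x = 0 := by
    simp [iteratedDeriv_id]
  rw [leibniz, Finset.sum_range_succ', Finset.sum_range_succ', Finset.sum_eq_zero higher_terms]
  simp [iteratedDeriv_id, add_comm, ← Nat.cast_smul_eq_nsmul 𝕜]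

theorem iteratedDeriv_eq_zero_of_odd_of_reflection_invariant_s5 [NeZero (2 : 𝕜)] {G : 𝕜 → E} {c : 𝕜}
    {n : ℕ} (hn : Odd n) (hG : (fun x ↦ G (2 * c - x)) =ᶠ[𝓝 c] G) :
    iteratedDeriv n G c = 0 := by
  have reflected : iteratedDeriv n G c = (-1 : 𝕜) ^ n • iteratedDeriv n G (2 * c - c) := by
    rw [← hG.iteratedDeriv_eq, iteratedDeriv_comp_const_sub]
  rw [hn.neg_one_pow, neg_one_smul, two_mul, add_sub_cancel_right,
    eq_neg_iff_add_eq_zero, ← two_smul 𝕜] at reflected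
  exact (smul_eq_zero_iff_right two_ne_zero).mp reflected

theorem smul_iteratedDeriv_odd_eq_of_eventuallyEq_id_smul [NeZero (2 : 𝕜)] {F G : 𝕜 → E} {c : 𝕜}
    {n : ℕ} (hF : F =ᶠ[𝓝 c] fun x ↦ x • G x) (hG : (fun x ↦ G (2 * c - x)) =ᶠ[𝓝 c] G)
    (hGn : ContDiffAt 𝕜 (2 * n + 1 : ℕ) G c) :
    c • iteratedDeriv (2 * n + 1) F c = (2 * n + 1 : 𝕜) • iteratedDeriv (2 * n) F c := by
  have odd_deriv (k : ℕ) : iteratedDeriv (2 * k + 1) G c = 0 :=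
    iteratedDeriv_eq_zero_of_odd_of_reflection_invariant_s5 (odd_two_mul_add_one k) hG
  have odd_order : iteratedDeriv (2 * n + 1) F c = (2 * n + 1 : 𝕜) • iteratedDeriv (2 * n) G c := by
    rw [hF.iteratedDeriv_eq, iteratedDeriv_succ_id_smul hGn, odd_deriv]
    simp
  have even_order : iteratedDeriv (2 * n) F c = c • iteratedDeriv (2 * n) G c := by
    rw [hF.iteratedDeriv_eq]
    cases n with
    | zero => simp
    | succ k =>
      have hGk : ContDiffAt 𝕜 (2 * k + 1 + 1 : ℕ) G c := hGn.of_le (by norm_cast; omega)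
      rw [Nat.mul_succ, iteratedDeriv_succ_id_smul hGk, odd_deriv, smul_zero, add_zero]
  rw [odd_order, even_order, smul_comm]

end IteratedDeriv

theorem sqrt_div_eq_div_sqrt_mul {x : ℝ} (hx : 0 ≤ x) (y : ℝ) : √(x / y) = x / √(x * y) := by
  rw [Real.sqrt_div hx, Real.sqrt_mul hx, ← div_div, Real.div_sqrt]

theorem stmt_5_general {E : Type*} [NormedAddCommGroup E] [NormedSpace ℝ E] {g : ℝ → E} {n : ℕ}
    (hg : ContDiffAt ℝ (2 * n + 1 : ℕ) g 1) :
    iteratedDeriv (2 * n + 1) (fun l ↦ √(l / (2 - l)) • g (2 * l - l ^ 2)) 1 =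
      (2 * n + 1 : ℝ) • iteratedDeriv (2 * n) (fun l ↦ √(l / (2 - l)) • g (2 * l - l ^ 2)) 1 := by
  let G (l : ℝ) : E := (√(2 * l - l ^ 2))⁻¹ • g (2 * l - l ^ 2)
  have factorization : (fun l ↦ √(l / (2 - l)) • g (2 * l - l ^ 2)) =ᶠ[𝓝 1] fun l ↦ l • G l := by
    filter_upwards [lt_mem_nhds one_pos] with l hl
    rw [sqrt_div_eq_div_sqrt_mul hl.le, div_eq_mul_inv, mul_smul,
      show l * (2 - l) = 2 * l - l ^ 2 by ring]
  have reflection (l : ℝ) : G (2 * 1 - l) = G l := by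
    simp only [G, show 2 * (2 * 1 - l) - (2 * 1 - l) ^ 2 = 2 * l - l ^ 2 by ring]
  have smooth : ContDiffAt ℝ (2 * n + 1 : ℕ) G 1 := by
    have inner_smooth : ContDiffAt ℝ (2 * n + 1 : ℕ) (fun l : ℝ ↦ 2 * l - l ^ 2) 1 := by fun_prop
    have inner_one : 2 * (1 : ℝ) - 1 ^ 2 = 1 := by norm_num
    refine .smul ((inner_smooth.sqrt (by norm_num)).inv (by norm_num)) ?_
    exact .comp 1 (by rwa [inner_one]) inner_smooth
  simpa only [one_smul] using smul_iteratedDeriv_odd_eq_of_eventuallyEq_id_smul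
    factorization (.of_forall reflection) smooth

/-- For F(λ) = √(λ/(2-λ))·g(2λ-λ²), F^{(2n+1)}(1) = (2n+1)·F^{(2n)}(1). -/
theorem stmt_5 (g : ℝ → ℝ) (hg : ContDiff ℝ (⊤ : ℕ∞) g) (n : ℕ) :
    iteratedDeriv (2 * n + 1)
        (fun l : ℝ => Real.sqrt (l / (2 - l)) * g (2 * l - l ^ 2)) 1
      = (2 * (n : ℝ) + 1) *
        iteratedDeriv (2 * n)
          (fun l : ℝ => Real.sqrt (l / (2 - l)) * g (2 * l - l ^ 2)) 1 :=
  stmt_5_general (contDiff_infty.mp hg (2 * n + 1)).contDiffAt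
end

section
/- For every λ ∈ (0,2) and every μ ∈ ℝ, with λ̃ := 2λ − λ², the following identity holds: (λ − 1 − cosh μ + √λ̃ · sinh μ)/(λ − 2) = cosh²(μ/2) · (1 − √(λ/(2−λ)) · tanh(μ/2))². -/
open Real

lemma cosh_mul_one_sub_mul_tanh (t x : ℝ) : cosh x * (1 - t * tanh x) = cosh x - t * sinh x := by
  rw [mul_one_sub, mul_left_comm, tanh_eq_sinh_div_cosh, mul_div_cancel₀ _ (cosh_pos x).ne']

lemma cosh_sub_mul_sinh_sq (t x : ℝ) :
    (cosh x - t * sinh x) ^ 2 =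
      ((1 + t ^ 2) * cosh (2 * x) + (1 - t ^ 2)) / 2 - t * sinh (2 * x) := by
  rw [cosh_two_mul, sinh_two_mul]
  linear_combination (1 - t ^ 2) / 2 * cosh_sq_sub_sinh_sq x

lemma sqrt_div_mul_self (x : ℝ) {y : ℝ} (hy : 0 ≤ y) : √(x / y) * y = √(x * y) := by
  rw [sqrt_div' x hy, sqrt_mul' x hy, div_mul_eq_mul_div, mul_div_assoc, div_sqrt]

/-- Lemma 3 (algebraic form): for λ ∈ (0,2), λ̃ = 2λ - λ² and any μ,
(λ - 1 - cosh μ + √λ̃ sinh μ)/(λ - 2) = cosh²(μ/2)·(1 - √(λ/(2-λ)) tanh(μ/2))². -/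
theorem stmt_8 (l : ℝ) (hl : l ∈ Set.Ioo (0 : ℝ) 2) (μ : ℝ) :
    (l - 1 - Real.cosh μ + Real.sqrt (2 * l - l ^ 2) * Real.sinh μ) / (l - 2)
      = Real.cosh (μ / 2) ^ 2 *
        (1 - Real.sqrt (l / (2 - l)) * Real.tanh (μ / 2)) ^ 2 := by
  obtain ⟨hl_pos, hl_lt⟩ := hl
  have h_pos : 0 < 2 - l := sub_pos.2 hl_lt
  have h_ne : l - 2 ≠ 0 := (sub_neg.2 hl_lt).ne
  have h_sqrt : √(2 * l - l ^ 2) = √(l / (2 - l)) * (2 - l) := by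
    rw [sqrt_div_mul_self l h_pos.le]
    ring_nf
  have h_sq : √(l / (2 - l)) ^ 2 * (2 - l) = l := by
    rw [sq_sqrt (div_nonneg hl_pos.le h_pos.le), div_mul_cancel₀ l h_pos.ne']
  rw [← mul_pow, cosh_mul_one_sub_mul_tanh, cosh_sub_mul_sinh_sq, mul_div_cancel₀ μ two_ne_zero,
    h_sqrt, div_eq_iff h_ne]
  linear_combination (cosh μ - 1) / 2 * h_sq
end
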